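/- For every τ = x + iy ∈ ℍ with x ≠ 0, one has 𝒟^{2k−1}(φ̂)(τ) = −((2k−2)!/(4π)^{2k−1}) · τ^{−k}, where 𝒟^{2k−1} is the (2k−1)-fold iterate of 𝒟 := (1/(2πi))·∂/∂τ. -/

import Mathlib

noncomputable section

open MeasureTheory

/-- The set of integral binary quadratic forms `[a,b,c]` of discriminant `D`. -/
def QD (D : ℤ) : Set (ℤ × ℤ × ℤ) := {q | q.2.1 ^ 2 - 4 * q.1 * q.2.2 = D}

/-- `Q(τ,1) = a τ² + b τ + c`. -/
def Qval (q : ℤ × ℤ × ℤ) (τ : ℂ) : ℂ :=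
  (q.1 : ℂ) * τ ^ 2 + (q.2.1 : ℂ) * τ + (q.2.2 : ℂ)

/-- `a|τ|² + b x + c` where `τ = x + iy`. -/
def Qell (q : ℤ × ℤ × ℤ) (τ : ℂ) : ℝ :=
  (q.1 : ℝ) * Complex.normSq τ + (q.2.1 : ℝ) * τ.re + (q.2.2 : ℝ)

/-- `ψ(v) = (1/2) ∫₀ᵛ u^(k-3/2) (1-u)^(-1/2) du`. -/
def psi (k : ℕ) (v : ℝ) : ℝ :=
  (1 / 2) * ∫ u in (0:ℝ)..v, u ^ ((k : ℝ) - 3 / 2) * (1 - u) ^ (-(1:ℝ) / 2)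

/-- real power of the integer `D`, as a complex number. -/
def Dpow (D : ℤ) (e : ℝ) : ℂ := (((D : ℝ) ^ e : ℝ) : ℂ)

/-- The summand of the series defining `F_{1-k,D}`. -/
def Fsummand (k : ℕ) (D : ℤ) (τ : ℂ) (q : ℤ × ℤ × ℤ) : ℂ :=
  ((Real.sign (Qell q τ) : ℝ) : ℂ) * Qval q τ ^ (k - 1) *
    ((psi k ((D : ℝ) * τ.im ^ 2 / Complex.normSq (Qval q τ)) : ℝ) : ℂ)

/-- `F_{1-k,D}`. -/
def F (k : ℕ) (D : ℤ) (τ : ℂ) : ℂ :=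
  (Dpow D (1 / 2 - (k : ℝ)) / (((Nat.choose (2 * k - 2) (k - 1) : ℝ) * Real.pi : ℝ) : ℂ)) *
    ∑' q : QD D, Fsummand k D τ (q : ℤ × ℤ × ℤ)

/-- `f_{k,D}`. -/
def fkD (k : ℕ) (D : ℤ) (τ : ℂ) : ℂ :=
  (Dpow D ((k : ℝ) - 1 / 2) / (((Nat.choose (2 * k - 2) (k - 1) : ℝ) * Real.pi : ℝ) : ℂ)) *
    ∑' q : QD D, Qval (q : ℤ × ℤ × ℤ) τ ^ (-(k : ℤ))

/-- Action of `SL₂(ℤ)` on binary quadratic forms: `(Q ∘ γ)(X,Y) = Q(pX+qY, rX+sY)`. -/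
def QAct (q : ℤ × ℤ × ℤ) (γ : Matrix.SpecialLinearGroup (Fin 2) ℤ) : ℤ × ℤ × ℤ :=
  (q.1 * (γ.1 0 0) ^ 2 + q.2.1 * (γ.1 0 0) * (γ.1 1 0) + q.2.2 * (γ.1 1 0) ^ 2,
   2 * q.1 * (γ.1 0 0) * (γ.1 0 1) + q.2.1 * ((γ.1 0 0) * (γ.1 1 1) + (γ.1 0 1) * (γ.1 1 0))
     + 2 * q.2.2 * (γ.1 1 0) * (γ.1 1 1),
   q.1 * (γ.1 0 1) ^ 2 + q.2.1 * (γ.1 0 1) * (γ.1 1 1) + q.2.2 * (γ.1 1 1) ^ 2)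

/-- A narrow class: an orbit of the `SL₂(ℤ)`-action on `QD D`. -/
def IsNarrowClass (D : ℤ) (𝒜 : Set (ℤ × ℤ × ℤ)) : Prop :=
  ∃ q₀ ∈ QD D, 𝒜 = {q | ∃ γ : Matrix.SpecialLinearGroup (Fin 2) ℤ, QAct q₀ γ = q}

/-- `F_{1-k,D,𝒜}`. -/
def FA (k : ℕ) (D : ℤ) (𝒜 : Set (ℤ × ℤ × ℤ)) (τ : ℂ) : ℂ :=
  ((-1 : ℂ) ^ k * Dpow D (1 / 2 - (k : ℝ)) /
      (((Nat.choose (2 * k - 2) (k - 1) : ℝ) * Real.pi : ℝ) : ℂ)) *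
    ∑' q : 𝒜, Fsummand k D τ (q : ℤ × ℤ × ℤ)

/-- `f_{k,D,𝒜}`. -/
def fA (k : ℕ) (D : ℤ) (𝒜 : Set (ℤ × ℤ × ℤ)) (τ : ℂ) : ℂ :=
  ((-1 : ℂ) ^ k * Dpow D ((k : ℝ) - 1 / 2) /
      (((Nat.choose (2 * k - 2) (k - 1) : ℝ) * Real.pi : ℝ) : ℂ)) *
    ∑' q : 𝒜, Qval (q : ℤ × ℤ × ℤ) τ ^ (-(k : ℤ))

/-- Partial derivative in the real direction `x`. -/
def dxx (G : ℂ → ℂ) (τ : ℂ) : ℂ :=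
  deriv (fun x : ℝ => G ((x : ℂ) + (τ.im : ℂ) * Complex.I)) τ.re

/-- Partial derivative in the imaginary direction `y`. -/
def dyy (G : ℂ → ℂ) (τ : ℂ) : ℂ :=
  deriv (fun y : ℝ => G ((τ.re : ℂ) + (y : ℂ) * Complex.I)) τ.im

/-- Wirtinger derivative `∂/∂τ̄ = (1/2)(∂/∂x + i ∂/∂y)`. -/
def wirDbar (G : ℂ → ℂ) (τ : ℂ) : ℂ := (dxx G τ + Complex.I * dyy G τ) / 2

/-- Wirtinger derivative `∂/∂τ = (1/2)(∂/∂x - i ∂/∂y)`. -/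
def wirD (G : ℂ → ℂ) (τ : ℂ) : ℂ := (dxx G τ - Complex.I * dyy G τ) / 2

/-- The operator `ξ_{2-2k}(G)(τ) = 2 i y^{2-2k} conj(∂G/∂τ̄)`. -/
def xiOp (k : ℕ) (G : ℂ → ℂ) (τ : ℂ) : ℂ :=
  2 * Complex.I * (τ.im : ℂ) ^ ((2 : ℤ) - 2 * (k : ℤ)) * (starRingEnd ℂ) (wirDbar G τ)

/-- The operator `𝒟 = (1/(2πi)) ∂/∂τ`. -/
def Dop (G : ℂ → ℂ) : ℂ → ℂ := fun τ => (1 / (2 * (Real.pi : ℂ) * Complex.I)) * wirD G τ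

/-- The weight `2-2k` hyperbolic Laplacian. -/
def DeltaOp (k : ℕ) (G : ℂ → ℂ) (τ : ℂ) : ℂ :=
  -(τ.im : ℂ) ^ 2 * (dxx (fun z => dxx G z) τ + dyy (fun z => dyy G z) τ)
    + Complex.I * ((2 : ℂ) - 2 * (k : ℂ)) * (τ.im : ℂ) * (dxx G τ + Complex.I * dyy G τ)

/-- `φ(v) = ∫₀ᵛ sin(u)^{2k-2} du`. -/
def phi (k : ℕ) (v : ℝ) : ℝ := ∫ u in (0:ℝ)..v, Real.sin u ^ (2 * k - 2)

/-- `φ̂(τ) = τ^{k-1} sgn(x) φ(arctan|y/x|)`, with value `0` when `x = 0`. -/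
def phiHat (k : ℕ) (τ : ℂ) : ℂ :=
  τ ^ (k - 1) * ((Real.sign τ.re : ℝ) : ℂ) *
    ((phi k (Real.arctan |τ.im / τ.re|) : ℝ) : ℂ)

/-- The non-holomorphic Eichler integral
`f^*(τ) = (2i)^{1-2k} ∫_{-τ̄}^{i∞} conj(f(-z̄)) (z+τ)^{2k-2} dz`,
parametrized along the vertical path `z = -τ̄ + it`, `t ∈ (0,∞)`. -/
def fstar (k : ℕ) (f : ℂ → ℂ) (τ : ℂ) : ℂ :=
  (2 * Complex.I) ^ ((1 : ℤ) - 2 * (k : ℤ)) * Complex.I *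
    ∫ t in Set.Ioi (0 : ℝ), (starRingEnd ℂ) (f (τ + (t : ℂ) * Complex.I)) *
      (((2 * τ.im + t : ℝ) : ℂ) * Complex.I) ^ (2 * k - 2)

/-- `a : ℕ → ℂ` is the sequence of Fourier coefficients of `f` (with `a n` the
coefficient of `e^{2πi(n+1)τ}`). -/
def HasFourier (a : ℕ → ℂ) (f : ℂ → ℂ) : Prop :=
  ∀ τ : ℂ, 0 < τ.im →
    f τ = ∑' n : ℕ, a n * Complex.exp (2 * (Real.pi : ℂ) * Complex.I * ((n : ℂ) + 1) * τ)

/-- The holomorphic Eichler integral `ℰ_f(τ) = ∑_{n≥1} (a_n/n^{2k-1}) e^{2πinτ}`. -/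
def EichlerE (k : ℕ) (a : ℕ → ℂ) (τ : ℂ) : ℂ :=
  ∑' n : ℕ, a n / ((n : ℂ) + 1) ^ (2 * k - 1) *
    Complex.exp (2 * (Real.pi : ℂ) * Complex.I * ((n : ℂ) + 1) * τ)

/-- `r_{a,b}(𝒜) = 1_{[Q_{a,b} ∈ 𝒜]} + (-1)^k 1_{[-Q_{a,b} ∈ 𝒜]}`. -/
def rab (k : ℕ) (D : ℤ) (𝒜 : Set (ℤ × ℤ × ℤ)) (a b : ℤ) : ℝ :=
  Set.indicator 𝒜 1 (a, b, (b ^ 2 - D) / (4 * a)) +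
    (-1 : ℝ) ^ k * Set.indicator 𝒜 1 (-a, -b, -((b ^ 2 - D) / (4 * a)))

/-- The constant `c_∞(𝒜)`. -/
def cInftyA (k : ℕ) (D : ℤ) (𝒜 : Set (ℤ × ℤ × ℤ)) : ℝ :=
  -(1 / (2 ^ (2 * k - 2) * (2 * (k : ℝ) - 1) * (Nat.choose (2 * k - 2) (k - 1) : ℝ))) *
    ∑' n : ℕ, (1 / ((n : ℝ) + 1) ^ k) *
      ∑ b ∈ Finset.range (2 * (n + 1)),
        if (4 * ((n : ℤ) + 1)) ∣ ((b : ℤ) ^ 2 - D) then rab k D 𝒜 ((n : ℤ) + 1) (b : ℤ) else 0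

/-- The constant `c_∞`. -/
def cInfty (k : ℕ) (D : ℤ) : ℝ :=
  -(1 / (2 ^ (2 * k - 3) * (2 * (k : ℝ) - 1) * (Nat.choose (2 * k - 2) (k - 1) : ℝ))) *
    ∑' n : ℕ, (1 / ((n : ℝ) + 1) ^ k) *
      (((Finset.range (2 * (n + 1))).filter
        (fun b : ℕ => (4 * ((n : ℤ) + 1)) ∣ ((b : ℤ) ^ 2 - D))).card : ℝ)

/-- The weight `2-2k` Hecke operator `T_p`. -/
def heckeT (k : ℕ) (p : ℕ) (g : ℂ → ℂ) (τ : ℂ) : ℂ :=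
  (p : ℂ) ^ ((1 : ℤ) - 2 * (k : ℤ)) * g ((p : ℂ) * τ) +
    (p : ℂ)⁻¹ * ∑ r ∈ Finset.range p, g ((τ + (r : ℂ)) / (p : ℂ))

open scoped Classical in
/-- The symbol `(D|p)`. -/
def legSym (D : ℤ) (p : ℕ) : ℤ :=
  if (p : ℤ) ∣ D then 0
  else if p = 2 then (if D % 8 = 1 ∨ D % 8 = 7 then 1 else -1)
  else if ∃ m : ℤ, (p : ℤ) ∣ (m ^ 2 - D) then 1 else -1

/-- Primitive forms of discriminant `D`. -/
def QDprim (D : ℤ) : Set (ℤ × ℤ × ℤ) :=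
  {q | q.2.1 ^ 2 - 4 * q.1 * q.2.2 = D ∧ Int.gcd q.1 (Int.gcd q.2.1 q.2.2) = 1}

/-- `F'_{1-k,D}`: the sum over primitive forms, with normalization `D^{(1-k)/2}`. -/
def Fprim (k : ℕ) (D : ℤ) (τ : ℂ) : ℂ :=
  (Dpow D ((1 - (k : ℝ)) / 2) / (((Nat.choose (2 * k - 2) (k - 1) : ℝ) * Real.pi : ℝ) : ℂ)) *
    ∑' q : QDprim D, Fsummand k D τ (q : ℤ × ℤ × ℤ)

/-- The root `η_Q = (-b+√D)/(2a)`. -/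
def etaQ (D : ℤ) (q : ℤ × ℤ × ℤ) : ℝ := (-(q.2.1 : ℝ) + Real.sqrt (D : ℝ)) / (2 * (q.1 : ℝ))

/-- The root `η'_Q = (-b-√D)/(2a)`. -/
def etaQ' (D : ℤ) (q : ℤ × ℤ × ℤ) : ℝ := (-(q.2.1 : ℝ) - Real.sqrt (D : ℝ)) / (2 * (q.1 : ℝ))

/-- The scaling matrix `A_Q`. -/
def AQ (D : ℤ) (q : ℤ × ℤ × ℤ) : Matrix (Fin 2) (Fin 2) ℝ :=
  (1 / Real.sqrt |etaQ D q - etaQ' D q|) •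
    !![1, -(etaQ' D q);
       -(Real.sign (etaQ D q - etaQ' D q)), Real.sign (etaQ D q - etaQ' D q) * etaQ D q]

/-- Real matrix associated to an element of `SL₂(ℤ)`. -/
def toR (γ : Matrix.SpecialLinearGroup (Fin 2) ℤ) : Matrix (Fin 2) (Fin 2) ℝ :=
  γ.1.map (fun n => (n : ℝ))

/-- Möbius action of a real `2×2` matrix on `ℂ`. -/
def moeb (g : Matrix (Fin 2) (Fin 2) ℝ) (τ : ℂ) : ℂ :=
  ((g 0 0 : ℝ) * τ + (g 0 1 : ℝ)) / ((g 1 0 : ℝ) * τ + (g 1 1 : ℝ))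

/-- Automorphy factor `j(g,τ) = cτ + d`. -/
def jfac (g : Matrix (Fin 2) (Fin 2) ℝ) (τ : ℂ) : ℂ :=
  ((g 1 0 : ℝ) : ℂ) * τ + ((g 1 1 : ℝ) : ℂ)

/-- `n`-th period `r_n(f) = ∫₀^∞ f(it) tⁿ dt`. -/
def periodR (f : ℂ → ℂ) (n : ℕ) : ℂ :=
  ∫ t in Set.Ioi (0 : ℝ), f ((t : ℂ) * Complex.I) * (t : ℂ) ^ n

/-- The even period polynomial `r⁺(f;X)`. -/
def rPlus (k : ℕ) (f : ℂ → ℂ) : Polynomial ℂ :=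
  ∑ m ∈ Finset.range k,
    Polynomial.C ((-1 : ℂ) ^ m * (Nat.choose (2 * k - 2) (2 * m) : ℂ) * periodR f (2 * m)) *
      Polynomial.X ^ (2 * k - 2 - 2 * m)

end

/-- `F` is real-differentiable at `τ` with `∂F/∂τ = A`. -/
def Wd (F : ℂ → ℂ) (A : ℂ) (τ : ℂ) : Prop :=
  ∃ B : ℂ, HasFDerivAt (𝕜 := ℝ) F
    (A • (ContinuousLinearMap.id ℝ ℂ) + B • (Complex.conjCLE : ℂ →L[ℝ] ℂ)) τ

def UU : Set ℂ := {τ | 0 < τ.im ∧ τ.re ≠ 0}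

theorem UU_open : IsOpen UU := by
  apply IsOpen.inter
  · exact isOpen_lt continuous_const Complex.continuous_im
  · exact isOpen_ne_fun Complex.continuous_re continuous_const

theorem UU_ne {τ : ℂ} (h : τ ∈ UU) : τ ≠ 0 := by
  rintro rfl
  exact h.2 rfl

theorem Wd.wirD {F : ℂ → ℂ} {A τ : ℂ} (h : Wd F A τ) : wirD F τ = A := by
  obtain ⟨B, h⟩ := h
  have hτ : (τ.re : ℂ) + (τ.im : ℂ) * Complex.I = τ := Complex.re_add_im τ
  have h1 : HasDerivAt (fun x : ℝ => (x : ℂ) + (τ.im : ℂ) * Complex.I) 1 τ.re :=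
    (Complex.ofRealCLM.hasDerivAt (x := τ.re)).add_const _
  have h2 : HasDerivAt (fun y : ℝ => (τ.re : ℂ) + (y : ℂ) * Complex.I) Complex.I τ.im := by
    simpa using ((Complex.ofRealCLM.hasDerivAt (x := τ.im)).mul_const Complex.I).const_add
      (τ.re : ℂ)
  have e1 := (HasFDerivAt.comp_hasDerivAt_of_eq τ.re h h1 hτ.symm).deriv
  have e2 := (HasFDerivAt.comp_hasDerivAt_of_eq τ.im h h2 hτ.symm).deriv
  have e1' : dxx F τ = A + B := by
    simpa [Function.comp_def, dxx] using e1
  have e2' : dyy F τ = A * Complex.I + B * (-Complex.I) := by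
    simpa [Function.comp_def, dyy] using e2
  rw [_root_.wirD, e1', e2']
  linear_combination (B - A) / 2 * Complex.I_sq

theorem Wd.congr {F G : ℂ → ℂ} {A τ : ℂ} (h : Wd F A τ) (hτ : τ ∈ UU)
    (hFG : ∀ z ∈ UU, G z = F z) : Wd G A τ := by
  obtain ⟨B, h⟩ := h
  refine ⟨B, h.congr_of_eventuallyEq ?_⟩
  filter_upwards [UU_open.mem_nhds hτ] with z hz using hFG z hz

theorem Wd.add {F G : ℂ → ℂ} {A A' τ : ℂ} (h : Wd F A τ) (h' : Wd G A' τ) :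
    Wd (fun z => F z + G z) (A + A') τ := by
  obtain ⟨B, h⟩ := h
  obtain ⟨B', h'⟩ := h'
  refine ⟨B + B', (h.add h').congr_fderiv ?_⟩
  apply ContinuousLinearMap.ext
  intro w
  simp
  ring

theorem Wd.mul {F G : ℂ → ℂ} {A A' τ : ℂ} (h : Wd F A τ) (h' : Wd G A' τ) :
    Wd (fun z => F z * G z) (A * G τ + F τ * A') τ := by
  obtain ⟨B, h⟩ := h
  obtain ⟨B', h'⟩ := h'
  refine ⟨B * G τ + F τ * B', (h.mul h').congr_fderiv ?_⟩
  apply ContinuousLinearMap.ext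
  intro w
  simp
  ring

theorem Wd_const (c τ : ℂ) : Wd (fun _ => c) 0 τ := by
  refine ⟨0, (hasFDerivAt_const c τ).congr_fderiv ?_⟩
  apply ContinuousLinearMap.ext
  intro w
  simp

theorem Wd.of_hasDerivAt {F : ℂ → ℂ} {A τ : ℂ} (h : HasDerivAt F A τ) : Wd F A τ := by
  refine ⟨0, (h.hasFDerivAt.restrictScalars ℝ).congr_fderiv ?_⟩
  apply ContinuousLinearMap.ext
  intro w
  simp [mul_comm]

theorem Wd.conj {F : ℂ → ℂ} {A τ : ℂ} (h : HasDerivAt F A ((starRingEnd ℂ) τ)) :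
    Wd (fun z => F ((starRingEnd ℂ) z)) 0 τ := by
  refine ⟨A, (HasFDerivAt.comp τ (h.hasFDerivAt.restrictScalars ℝ)
    (Complex.conjCLE : ℂ →L[ℝ] ℂ).hasFDerivAt).congr_fderiv ?_⟩
  apply ContinuousLinearMap.ext
  intro w
  simp [mul_comm]

theorem Wd.sum {ι : Type} (s : Finset ι) {F : ι → ℂ → ℂ} {A : ι → ℂ} {τ : ℂ}
    (h : ∀ i ∈ s, Wd (F i) (A i) τ) : Wd (fun z => ∑ i ∈ s, F i z) (∑ i ∈ s, A i) τ := by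
  classical
  induction s using Finset.induction_on with
  | empty => simpa using Wd_const 0 τ
  | insert a s ha ih =>
    simp only [Finset.sum_insert ha]
    exact (h a (by simp)).add (ih fun i hi => h i (by simp [hi]))

/-- `∂^r F = G` on `UU`. -/
def ItD : ℕ → (ℂ → ℂ) → (ℂ → ℂ) → Prop
  | 0, F, G => ∀ τ ∈ UU, F τ = G τ
  | r + 1, F, G => ∃ F' : ℂ → ℂ, (∀ τ ∈ UU, Wd F (F' τ) τ) ∧ ItD r F' G

theorem ItD.add : ∀ {r : ℕ} {F G F' G' : ℂ → ℂ}, ItD r F G → ItD r F' G' →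
    ItD r (fun z => F z + F' z) (fun z => G z + G' z)
  | 0, _, _, _, _, h, h' => fun τ hτ => by simp only [h τ hτ, h' τ hτ]
  | _ + 1, _, _, _, _, ⟨F1, h1, h2⟩, ⟨F1', h1', h2'⟩ =>
    ⟨fun z => F1 z + F1' z, fun τ hτ => (h1 τ hτ).add (h1' τ hτ), h2.add h2'⟩

theorem ItD.congr {r : ℕ} {F F' G : ℂ → ℂ} (h : ItD r F G) (hF : ∀ z ∈ UU, F' z = F z) :
    ItD r F' G := by
  cases r with
  | zero => exact fun τ hτ => (hF τ hτ).trans (h τ hτ)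
  | succ r =>
    obtain ⟨F1, h1, h2⟩ := h
    exact ⟨F1, fun τ hτ => (h1 τ hτ).congr hτ hF, h2⟩

theorem ItD.trans : ∀ {r s : ℕ} {F G H : ℂ → ℂ}, ItD r F G → ItD s G H → ItD (s + r) F H
  | 0, _, _, _, _, h, h' => h'.congr h
  | _ + 1, _, _, _, _, ⟨F1, h1, h2⟩, h' => ⟨F1, h1, h2.trans h'⟩

theorem ItD_zero : ∀ r : ℕ, ItD r (fun _ => 0) (fun _ => 0)
  | 0 => fun _ _ => rfl
  | r + 1 => ⟨fun _ => 0, fun τ _ => Wd_const 0 τ, ItD_zero r⟩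

theorem ItD.sum {ι : Type} (r : ℕ) (s : Finset ι) {F : ι → ℂ → ℂ}
    (h : ∀ i ∈ s, ItD r (F i) (fun _ => 0)) : ItD r (fun z => ∑ i ∈ s, F i z) (fun _ => 0) := by
  classical
  induction s using Finset.induction_on with
  | empty => simpa using ItD_zero r
  | insert a s ha ih =>
    simp only [Finset.sum_insert ha]
    simpa using (h a (by simp)).add (ih fun i hi => h i (by simp [hi]))

theorem ItD.Dop : ∀ {r : ℕ} {F G : ℂ → ℂ} (c : ℂ) (F0 : ℂ → ℂ), ItD r F G →
    (∀ z ∈ UU, F0 z = c * F z) →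
    ∀ τ ∈ UU, (Dop^[r] F0) τ = c * (1 / (2 * (Real.pi : ℂ) * Complex.I)) ^ r * G τ
  | 0, F, G, c, F0, h, h0, τ, hτ => by simp [h0 τ hτ, h τ hτ]
  | r + 1, F, G, c, F0, ⟨F1, h1, h2⟩, h0, τ, hτ => by
    rw [Function.iterate_succ_apply,
      ItD.Dop (c * (1 / (2 * (Real.pi : ℂ) * Complex.I))) (_root_.Dop F0) h2 _ τ hτ]
    · ring
    · intro z hz
      have := (((Wd_const c z).mul (h1 z hz)).congr hz h0).wirD
      rw [_root_.Dop, this]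
      ring

theorem Wd_pow (j : ℕ) (τ : ℂ) : Wd (fun z => z ^ j) (j * τ ^ (j - 1)) τ :=
  Wd.of_hasDerivAt (hasDerivAt_pow j τ)

theorem ItD_poly {H : ℂ → ℂ} (hH : ∀ τ ∈ UU, Wd H 0 τ) : ∀ (r j : ℕ) (c : ℂ), j < r →
    ItD r (fun z => c * z ^ j * H z) (fun _ => 0)
  | r + 1, 0, c, _ => ⟨fun _ => 0, fun τ hτ => by
      have := ((Wd_const c τ).mul (hH τ hτ))
      simpa using this, ItD_zero r⟩
  | r + 1, j + 1, c, hj => ⟨fun z => (c * (j + 1)) * z ^ j * H z, fun τ hτ => by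
      have := (((Wd_const c τ).mul (Wd_pow (j + 1) τ)).mul (hH τ hτ))
      simp only [Nat.add_sub_cancel] at this
      convert this using 1
      push_cast
      ring, ItD_poly hH r j _ (by omega)⟩

theorem ItD_log {v : ℂ → ℂ} (hv : ∀ τ ∈ UU, Wd v (1 / (2 * Complex.I * τ)) τ) :
    ∀ (p : ℕ) (a b : ℂ), ItD (p + 1) (fun z => a * z ^ p * v z + b * z ^ p)
      (fun z => a * p.factorial / (2 * Complex.I) * z⁻¹)
  | 0, a, b => ⟨fun z => a / (2 * Complex.I) * z⁻¹, fun τ hτ => by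
      have := ((Wd_const a τ).mul (hv τ hτ)).add (Wd_const b τ)
      have h0 := UU_ne hτ
      simp only [pow_zero, mul_one]
      convert this using 1
      field_simp
      ring, fun τ _ => by simp⟩
  | p + 1, a, b => ⟨fun z => (a * (p + 1)) * z ^ p * v z + (a / (2 * Complex.I) + b * (p + 1)) * z ^ p,
    fun τ hτ => by
      have := (((Wd_const a τ).mul (Wd_pow (p + 1) τ)).mul (hv τ hτ)).add
        ((Wd_const b τ).mul (Wd_pow (p + 1) τ))
      have h0 := UU_ne hτ
      simp only [Nat.add_sub_cancel] at this
      convert this using 1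
      push_cast
      field_simp
      ring, by
      have := ItD_log hv p (a * (p + 1)) (a / (2 * Complex.I) + b * (p + 1))
      convert this using 2
      rw [Nat.factorial_succ]
      push_cast
      ring⟩

theorem ItD_inv : ∀ (r m : ℕ) (c : ℂ), ItD r (fun z => c * (m.factorial : ℂ) * (z ^ (m + 1))⁻¹)
      (fun z => c * (-1) ^ r * ((m + r).factorial : ℂ) * (z ^ (m + r + 1))⁻¹)
  | 0, m, c => fun τ _ => by simp
  | r + 1, m, c => ⟨fun z => (-c) * ((m + 1).factorial : ℂ) * (z ^ (m + 1 + 1))⁻¹, fun τ hτ => by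
      have h0 := UU_ne hτ
      have := (Wd_const (c * (m.factorial : ℂ)) τ).mul
        (Wd.of_hasDerivAt (F := fun z => (z ^ (m + 1))⁻¹)
          ((hasDerivAt_pow (m + 1) τ).inv (pow_ne_zero _ h0)))
      convert this using 1
      rw [Nat.factorial_succ]
      push_cast
      try simp only [Nat.add_sub_cancel]
      field_simp
      ring, by
      have := ItD_inv r (m + 1) (-c)
      convert this using 2
      rw [show m + (r + 1) = m + 1 + r by ring]
      ring⟩

theorem Wd_real {V : ℂ → ℝ} {L : ℂ →L[ℝ] ℝ} {A B τ : ℂ} (h : HasFDerivAt V L τ)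
    (hL : ∀ w, (L w : ℂ) = A * w + B * (starRingEnd ℂ) w) {f : ℝ → ℝ} {f' : ℝ}
    (hf : HasDerivAt f f' (V τ)) : Wd (fun z => ((f (V z) : ℝ) : ℂ)) (f' * A) τ := by
  refine ⟨f' * B, (HasFDerivAt.comp τ Complex.ofRealCLM.hasFDerivAt
    (hf.comp_hasFDerivAt τ h)).congr_fderiv ?_⟩
  apply ContinuousLinearMap.ext
  intro w
  simp [hL]
  ring

theorem Wd_arctan {τ : ℂ} (hτ : τ ∈ UU) {f : ℝ → ℝ} {f' : ℝ}
    (hf : HasDerivAt f f' (Real.arctan (τ.im / τ.re))) :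
    Wd (fun z => ((f (Real.arctan (z.im / z.re)) : ℝ) : ℂ)) (f' * (1 / (2 * Complex.I * τ))) τ := by
  have hx : τ.re ≠ 0 := hτ.2
  have h0 : τ ≠ 0 := UU_ne hτ
  have h0' : (starRingEnd ℂ) τ ≠ 0 := by simpa using h0
  have hre : HasFDerivAt (fun z : ℂ => z.re) Complex.reCLM τ := Complex.reCLM.hasFDerivAt
  have him : HasFDerivAt (fun z : ℂ => z.im) Complex.imCLM τ := Complex.imCLM.hasFDerivAt
  have hV := (him.mul ((hasDerivAt_inv hx).comp_hasFDerivAt τ hre)).arctan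
  refine Wd_real (B := -(1 / (2 * Complex.I * (starRingEnd ℂ) τ))) (V := fun z => Real.arctan (z.im / z.re)) hV ?_ hf
  intro w
  have hns : τ.re ^ 2 + τ.im ^ 2 ≠ 0 := by positivity
  have key : (1 / (2 * Complex.I * τ)) * w + -(1 / (2 * Complex.I * (starRingEnd ℂ) τ)) * (starRingEnd ℂ) w
      = (((τ.re * w.im - τ.im * w.re) / (τ.re ^ 2 + τ.im ^ 2) : ℝ) : ℂ) := by
    have e : ((τ.re ^ 2 + τ.im ^ 2 : ℝ) : ℂ) = τ * (starRingEnd ℂ) τ := by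
      rw [Complex.mul_conj, Complex.normSq_apply]; push_cast; ring
    rw [Complex.ofReal_div, e]
    field_simp
    apply Complex.ext <;> simp <;> ring
  rw [key]
  congr 1
  simp
  field_simp
  ring

theorem phiHat_eq {n : ℕ} {τ : ℂ} (hτ : τ ∈ UU) :
    phiHat (n + 1) τ = τ ^ n * ((phi (n + 1) (Real.arctan (τ.im / τ.re)) : ℝ) : ℂ) := by
  have hodd : ∀ v, phi (n + 1) (-v) = - phi (n + 1) v := by
    intro v
    unfold phi
    have := intervalIntegral.integral_comp_neg (a := 0) (b := v)
      (fun u : ℝ => Real.sin u ^ (2 * (n + 1) - 2))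
    rw [intervalIntegral.integral_symm, ← neg_zero, ← this]
    congr 1
    simp [Real.sin_neg, show 2 * (n + 1) - 2 = 2 * n by omega, pow_mul]
  unfold phiHat
  rcases lt_or_gt_of_ne hτ.2 with h | h
  · rw [Real.sign_of_neg h, abs_of_neg (div_neg_of_pos_of_neg hτ.1 h), Real.arctan_neg, hodd]
    simp
  · rw [Real.sign_of_pos h, abs_of_pos (div_pos hτ.1 h)]
    simp

theorem sin_pow_eq {n : ℕ} {τ : ℂ} (hτ : τ ∈ UU) :
    ((Real.sin (Real.arctan (τ.im / τ.re)) ^ (2 * n) : ℝ) : ℂ) =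
      ∑ j ∈ Finset.range (2 * n + 1), (-1 / 4 : ℂ) ^ n * (-1) ^ j * ((2 * n).choose j : ℂ) *
        τ ^ ((j : ℤ) - n) * ((starRingEnd ℂ) τ) ^ ((n : ℤ) - j) := by
  have hx : τ.re ≠ 0 := hτ.2
  have h0 : τ ≠ 0 := UU_ne hτ
  have h0' : (starRingEnd ℂ) τ ≠ 0 := by simpa using h0
  have hns : τ.re ^ 2 + τ.im ^ 2 ≠ 0 := by positivity
  have h1 : Real.sin (Real.arctan (τ.im / τ.re)) ^ 2 = τ.im ^ 2 / (τ.re ^ 2 + τ.im ^ 2) := by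
    rw [Real.sin_arctan, div_pow, Real.sq_sqrt (by positivity)]
    field_simp
  have e : ((τ.re ^ 2 + τ.im ^ 2 : ℝ) : ℂ) = τ * (starRingEnd ℂ) τ := by
    rw [Complex.mul_conj, Complex.normSq_apply]; push_cast; ring
  have h2 : ((τ.im ^ 2 : ℝ) : ℂ) = (-1 / 4) * (τ + -(starRingEnd ℂ) τ) ^ 2 := by
    rw [← sub_eq_add_neg, Complex.sub_conj, mul_pow, Complex.I_sq]
    push_cast; ring
  rw [pow_mul, h1, Complex.ofReal_pow, Complex.ofReal_div, e, h2, div_pow, mul_pow, ← pow_mul,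
    add_pow, Finset.mul_sum, Finset.sum_div]
  refine Finset.sum_congr rfl fun j hj => ?_
  have hj' : j ≤ 2 * n := by simpa [Nat.lt_succ_iff] using hj
  obtain ⟨m, hm⟩ := Nat.exists_eq_add_of_le hj'
  rw [show (n : ℤ) - j = (m : ℤ) - n by omega, show 2 * n - j = m by omega,
    zpow_sub₀ h0, zpow_sub₀ h0', neg_pow ((starRingEnd ℂ) τ) m]
  have hs : (-1 : ℂ) ^ m = (-1) ^ j := by
    have : Even (j + m) := ⟨n, by omega⟩
    rcases Nat.even_or_odd j with hjj | hjj
    · rw [hjj.neg_one_pow, ((Nat.even_add.mp this).mp hjj).neg_one_pow]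
    · rw [hjj.neg_one_pow, (by
        rw [← Nat.not_even_iff_odd] at hjj ⊢
        exact fun h => hjj ((Nat.even_add.mp this).mpr h) : Odd m).neg_one_pow]
  rw [hs]
  simp only [zpow_natCast, mul_pow]
  field_simp

theorem main_ItD (n : ℕ) : ItD (2 * n + 1) (phiHat (n + 1))
    (fun z => ((-1 / 4 : ℂ) ^ n * (-1) ^ n * ((2 * n).choose n : ℂ)) * n.factorial / (2 * Complex.I)
      * (-1) ^ n * (n.factorial : ℂ) * (z ^ (n + 1))⁻¹) := by
  set c : ℕ → ℂ := fun j => (-1 / 4 : ℂ) ^ n * (-1) ^ j * ((2 * n).choose j : ℂ) with hc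
  set v : ℂ → ℂ := fun z => ((Real.arctan (z.im / z.re) : ℝ) : ℂ) with hv
  set P : ℂ → ℂ := fun z => ((phi (n + 1) (Real.arctan (z.im / z.re)) : ℝ) : ℂ) with hP
  set a : ℕ → ℂ := fun j => c j / (2 * Complex.I) / ((j : ℂ) - n) with ha
  have hvW : ∀ τ ∈ UU, Wd v (1 / (2 * Complex.I * τ)) τ := by
    intro τ hτ
    have := Wd_arctan hτ (hasDerivAt_id _)
    rwa [Complex.ofReal_one, one_mul] at this
  have hPW : ∀ τ ∈ UU, Wd P (((Real.sin (Real.arctan (τ.im / τ.re)) ^ (2 * n) : ℝ) : ℂ) *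
      (1 / (2 * Complex.I * τ))) τ := by
    intro τ hτ
    refine Wd_arctan hτ ?_
    have hcont : Continuous fun u : ℝ => Real.sin u ^ (2 * n) := by fun_prop
    exact intervalIntegral.integral_hasDerivAt_right (hcont.intervalIntegrable _ _)
      (hcont.stronglyMeasurableAtFilter _ _) hcont.continuousAt
  have hterm : ∀ j : ℕ, ∀ τ ∈ UU, Wd (fun z => a j * z ^ ((j : ℤ) - n) *
      ((starRingEnd ℂ) z) ^ ((n : ℤ) - j))
      (a j * (((j : ℂ) - n) * τ ^ ((j : ℤ) - n - 1)) * ((starRingEnd ℂ) τ) ^ ((n : ℤ) - j)) τ := by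
    intro j τ hτ
    have h0 := UU_ne hτ
    have h0' : (starRingEnd ℂ) τ ≠ 0 := by simpa using h0
    have := ((Wd_const (a j) τ).mul (Wd.of_hasDerivAt (hasDerivAt_zpow ((j : ℤ) - n) τ (Or.inl h0)))).mul
      (Wd.conj (hasDerivAt_zpow ((n : ℤ) - j) ((starRingEnd ℂ) τ) (Or.inl h0')))
    convert this using 1
    push_cast
    ring
  set H : ℂ → ℂ := fun z => P z + (-c n * v z + (-1) * ∑ j ∈ Finset.range (2 * n + 1),
    a j * z ^ ((j : ℤ) - n) * ((starRingEnd ℂ) z) ^ ((n : ℤ) - j)) with hH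
  have hHW : ∀ τ ∈ UU, Wd H 0 τ := by
    intro τ hτ
    have h0 := UU_ne hτ
    have h0' : (starRingEnd ℂ) τ ≠ 0 := by simpa using h0
    have := (hPW τ hτ).add (((Wd_const (-c n) τ).mul (hvW τ hτ)).add ((Wd_const (-1) τ).mul
      (Wd.sum (Finset.range (2 * n + 1)) fun j _ => hterm j τ hτ)))
    convert this using 1
    have hmem : n ∈ Finset.range (2 * n + 1) := by simp; omega
    rw [zero_mul, zero_mul, sin_pow_eq hτ, ← Finset.add_sum_erase _ _ hmem,
      ← Finset.add_sum_erase _ (fun i => a i * (((i : ℂ) - n) * τ ^ ((i : ℤ) - n - 1)) * _) hmem]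
    have hs : ∑ j ∈ (Finset.range (2 * n + 1)).erase n,
        (a j * (((j : ℂ) - n) * τ ^ ((j : ℤ) - n - 1)) * ((starRingEnd ℂ) τ) ^ ((n : ℤ) - j)) =
        (∑ j ∈ (Finset.range (2 * n + 1)).erase n, (-1 / 4 : ℂ) ^ n * (-1) ^ j *
          ((2 * n).choose j : ℂ) * τ ^ ((j : ℤ) - n) * ((starRingEnd ℂ) τ) ^ ((n : ℤ) - j)) *
          (1 / (2 * Complex.I * τ)) := by
      rw [Finset.sum_mul]
      refine Finset.sum_congr rfl fun j hj => ?_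
      have hjn : (j : ℂ) - n ≠ 0 := by
        rw [sub_ne_zero]
        exact_mod_cast Finset.ne_of_mem_erase hj
      rw [zpow_sub_one₀ h0]
      simp only [ha, hc]
      field_simp
    rw [hs]
    simp only [hc, sub_self]
    simp
    ring
  have hlog := (ItD_log hvW n (c n) 0).trans
    ((ItD_inv n 0 (c n * n.factorial / (2 * Complex.I))).congr (fun z _ => by simp))
  have hH' := ItD_poly hHW (2 * n + 1) n 1 (by omega)
  have hS : ItD (2 * n + 1) (fun z => ∑ j ∈ Finset.range (2 * n + 1),
      a j * z ^ j * ((starRingEnd ℂ) z) ^ ((n : ℤ) - j)) (fun _ => 0) := by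
    refine ItD.sum _ _ fun j hj => ?_
    refine ItD_poly (H := fun z => ((starRingEnd ℂ) z) ^ ((n : ℤ) - j)) ?_ _ _ _ (by simpa using hj)
    intro τ hτ
    have h0' : (starRingEnd ℂ) τ ≠ 0 := by simpa using UU_ne hτ
    exact Wd.conj (hasDerivAt_zpow ((n : ℤ) - j) ((starRingEnd ℂ) τ) (Or.inl h0'))
  rw [show n + (n + 1) = 2 * n + 1 by ring] at hlog
  have hall := (hlog.add hH').add hS
  have := hall.congr (F' := phiHat (n + 1)) (fun z hz => by
    have h0 := UU_ne hz
    rw [phiHat_eq hz]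
    have : ∑ j ∈ Finset.range (2 * n + 1), a j * z ^ j * ((starRingEnd ℂ) z) ^ ((n : ℤ) - j) =
      z ^ n * ∑ j ∈ Finset.range (2 * n + 1),
        a j * z ^ ((j : ℤ) - n) * ((starRingEnd ℂ) z) ^ ((n : ℤ) - j) := by
      rw [Finset.mul_sum]
      refine Finset.sum_congr rfl fun j _ => ?_
      rw [zpow_sub₀ h0]
      simp only [zpow_natCast]
      field_simp
    rw [this]
    simp only [hH, hP]
    ring)
  convert this using 2
  simp [hc]

theorem stmt7 (k : ℕ) (hk : 2 ≤ k) (τ : ℂ) (hτ : 0 < τ.im) (hx : τ.re ≠ 0) :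
    (Dop^[2 * k - 1] (phiHat k)) τ =
      -((Nat.factorial (2 * k - 2) : ℂ) / (((4 * Real.pi) ^ (2 * k - 1) : ℝ) : ℂ)) *
        τ ^ (-(k : ℤ)) := by
  obtain ⟨n, rfl⟩ : ∃ n, k = n + 1 := ⟨k - 1, by omega⟩
  have hmem : τ ∈ UU := ⟨hτ, hx⟩
  have h0 := UU_ne hmem
  have := (main_ItD n).Dop 1 (phiHat (n + 1)) (fun z _ => by ring) τ hmem
  rw [show 2 * (n + 1) - 1 = 2 * n + 1 by omega, show 2 * (n + 1) - 2 = 2 * n by omega, this]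
  have hf : ((2 * n).factorial : ℂ) = ((2 * n).choose n : ℂ) * n.factorial * n.factorial := by
    have := Nat.choose_mul_factorial_mul_factorial (show n ≤ 2 * n by omega)
    rw [show 2 * n - n = n by omega] at this
    exact_mod_cast this.symm
  have hpi : (Real.pi : ℂ) ≠ 0 := by exact_mod_cast Real.pi_ne_zero
  have hz : τ ^ (-((n + 1 : ℕ) : ℤ)) = (τ ^ (n + 1))⁻¹ := by
    rw [zpow_neg, zpow_natCast]
  have hI : (1 / (2 * (Real.pi : ℂ) * Complex.I)) ^ (2 * n + 1) =
      (-1) ^ n * ((2 * (Real.pi : ℂ)) ^ (2 * n + 1))⁻¹ * (-Complex.I) := by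
    have : (1 / (2 * (Real.pi : ℂ) * Complex.I)) = (2 * (Real.pi : ℂ))⁻¹ * (-Complex.I) := by
      rw [one_div, mul_inv, Complex.inv_I]
    rw [this, mul_pow, pow_succ (-Complex.I), pow_mul (-Complex.I), neg_sq, Complex.I_sq, inv_pow]
    ring
  have h4 : (((4 * Real.pi) ^ (2 * n + 1) : ℝ) : ℂ) =
      2 * 4 ^ n * (2 * (Real.pi : ℂ)) ^ (2 * n + 1) := by
    push_cast
    rw [show (4 : ℂ) * Real.pi = 2 * (2 * Real.pi) by ring, mul_pow 2 (2 * (Real.pi : ℂ)), pow_succ 2,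
      pow_mul 2]
    norm_num
    ring
  rw [hz, hf, hI, h4, div_pow]
  have hs : ((-1 : ℂ) ^ n) * (-1) ^ n = 1 := by rw [← mul_pow]; simp
  have hI0 := Complex.I_ne_zero
  generalize (-1 : ℂ) ^ n = s at *
  field_simp
  linear_combination (-(s ^ 2) - 1) * ((2 * n).choose n : ℂ) * (n.factorial : ℂ) ^ 2 * hs
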